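/- Let w ∈ ℝ^d with ‖w‖₂ = 1, let x_orig ∈ ℝ^d, and let x ∈ ℝ^d be a perturbed sample with ‖x_orig − x‖₂ ≤ ε for some ε > 0. Let x_cf := x_orig − (wᵀx_orig)·w and let x_cf' be any point with ‖x − x_cf'‖₂ ≤ ‖x − x_cf‖₂ (the minimality property of the closest counterfactual of x). Then ‖x_cf − x_cf'‖₂ ≤ 2ε + 2|wᵀx_orig|. -/

import Mathlib

open RealInnerProductSpace

theorem dist_le_two_mul_dist_of_dist_le {α : Type*} [PseudoMetricSpace α] {x y z : α}
    (h : dist x z ≤ dist x y) : dist y z ≤ 2 * dist x y :=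
  calc
    dist y z ≤ dist x y + dist x z := dist_triangle_left y z x
    _ ≤ dist x y + dist x y := by gcongr
    _ = 2 * dist x y := (two_mul _).symm

theorem closest_counterfactual_perturbation_bound_linear_classifier_general
    {α : Type*} [PseudoMetricSpace α] {xorig x xcf xcf' : α} {ε : ℝ}
    (hpert : dist xorig x ≤ ε) (hmin : dist x xcf' ≤ dist x xcf) :
    dist xcf xcf' ≤ 2 * ε + 2 * dist xorig xcf :=
  calc
    dist xcf xcf' ≤ 2 * dist x xcf := dist_le_two_mul_dist_of_dist_le hmin
    _ ≤ 2 * (dist xorig x + dist xorig xcf) := by gcongr; exact dist_triangle_left x xcf xorig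
    _ ≤ 2 * (ε + dist xorig xcf) := by gcongr
    _ = 2 * ε + 2 * dist xorig xcf := mul_add _ _ _

/-- Bound on closest counterfactuals of perturbed samples for a binary linear
classifier (Corollary 1 of the paper): with `x_cf = x_orig − (wᵀx_orig)·w` and
`x_cf'` at least as close to the perturbed sample `x` as `x_cf` is,
`‖x_cf − x_cf'‖₂ ≤ 2ε + 2|wᵀx_orig|`. -/
theorem closest_counterfactual_perturbation_bound_linear_classifier
    (d : ℕ) (w xorig x xcf' : EuclideanSpace ℝ (Fin d)) (hw : ‖w‖ = 1)
    (ε : ℝ) (hε : 0 < ε)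
    (hpert : ‖xorig - x‖ ≤ ε)
    (hmin : ‖x - xcf'‖ ≤ ‖x - (xorig - ⟪w, xorig⟫ • w)‖) :
    ‖(xorig - ⟪w, xorig⟫ • w) - xcf'‖ ≤ 2 * ε + 2 * |⟪w, xorig⟫| := by
  have hdist : dist xorig (xorig - ⟪w, xorig⟫ • w) = |⟪w, xorig⟫| := by
    rw [dist_self_sub_right, norm_smul, hw, mul_one, Real.norm_eq_abs]
  simp only [← dist_eq_norm] at hpert hmin ⊢
  exact hdist ▸ closest_counterfactual_perturbation_bound_linear_classifier_general hpert hmin
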